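/- arXiv:1407.5016 — 2 statements merged into one kernel-verified Lean document; each statement's English description precedes it below -/
import Mathlib

section
/- Let X be a real normed linear space that is smooth and strictly convex with dim X ≥ 3. Then the norm of X arises from an inner product if and only if for every element x ∈ X and every one-dimensional linear subspace G of X there exists an element g_0 ∈ G that is simultaneously the best approximation to x out of G and the best coapproximation to x out of G. -/
/-- A real normed linear space is smooth if every nonzero vector has a unique norming
functional: a continuous linear functional `f` with `‖f‖ = 1` and `f x = ‖x‖`. -/
def SmoothSpace (X : Type*) [NormedAddCommGroup X] [NormedSpace ℝ X] : Prop :=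
  ∀ x : X, x ≠ 0 → ∃! f : X →L[ℝ] ℝ, ‖f‖ = 1 ∧ f x = ‖x‖

section helpers
variable {X : Type*} [NormedAddCommGroup X] [NormedSpace ℝ X]

theorem hb_aux (hsm : SmoothSpace X) {y z : X} (hy : y ≠ 0)
    (h : ∀ s : ℝ, ‖y‖ ≤ ‖y + s • z‖) (f : X →L[ℝ] ℝ) (hf : ‖f‖ = 1) (hfy : f y = ‖y‖) :
    f z = 0 := by
  set S : Submodule ℝ X := Submodule.span ℝ {z} with hS
  have : IsClosed (S : Set X) := Submodule.closed_of_finiteDimensional S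
  have hq : ‖(S.mkQ y)‖ = ‖y‖ := by
    apply le_antisymm
    · exact Submodule.Quotient.norm_mk_le S y
    · refine le_of_forall_pos_le_add fun ε hε => ?_
      obtain ⟨m, hm, hlt⟩ := Submodule.Quotient.norm_mk_lt (S := S) (S.mkQ y) hε
      have hm' : m - y ∈ S := by
        rw [← Submodule.Quotient.eq]; simpa using hm
      obtain ⟨c, hc⟩ := Submodule.mem_span_singleton.1 hm'
      have := h c
      rw [hc] at this
      have e : y + (m - y) = m := by abel
      rw [e] at this
      linarith
  have hpos : 0 < ‖y‖ := norm_pos_iff.2 hy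
  have hne : S.mkQ y ≠ 0 := by
    intro h0; rw [h0, norm_zero] at hq; linarith
  obtain ⟨g, hg1, hg2⟩ := exists_dual_vector ℝ (S.mkQ y) (by simpa using norm_ne_zero_iff.2 hne)
  have hb : ∀ x, ‖g (S.mkQ x)‖ ≤ 1 * ‖x‖ := fun x => by
    calc ‖g (S.mkQ x)‖ ≤ ‖g‖ * ‖S.mkQ x‖ := g.le_opNorm _
      _ ≤ 1 * ‖x‖ := by
        rw [hg1]
        exact mul_le_mul_of_nonneg_left (Submodule.Quotient.norm_mk_le S x) zero_le_one
  let k : X →L[ℝ] ℝ := LinearMap.mkContinuous (g.toLinearMap ∘ₗ S.mkQ) 1 hb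
  have hk : ∀ x, k x = g (S.mkQ x) := fun x => rfl
  have hky : k y = ‖y‖ := by rw [hk, hg2, ← hq]; rfl
  have hk1 : ‖k‖ = 1 := by
    apply le_antisymm
    · exact LinearMap.mkContinuous_norm_le _ zero_le_one _
    · have := k.le_opNorm y
      rw [hky, Real.norm_eq_abs, abs_of_pos hpos] at this
      nlinarith
  have : f = k := (hsm y hy).unique ⟨hf, hfy⟩ ⟨hk1, hky⟩
  rw [this, hk]
  have : S.mkQ z = 0 := by
    simp [hS, Submodule.mem_span_singleton_self]
  rw [this, map_zero]

structure DualMap (D : X → X →L[ℝ] ℝ) : Prop where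
  le : ∀ x, x ≠ 0 → ∀ y, D x y ≤ ‖y‖
  self : ∀ x, x ≠ 0 → D x x = ‖x‖
  sym : ∀ x y, x ≠ 0 → y ≠ 0 → D x y = 0 → D y x = 0

structure Ortho (D : X → X →L[ℝ] ℝ) (u v : X) : Prop where
  nu : ‖u‖ = 1
  nv : ‖v‖ = 1
  uv : D u v = 0
  vu : D v u = 0

theorem nz {u : X} (hu : ‖u‖ = 1) : u ≠ 0 := by
  rintro rfl; simp at hu

variable {D : X → X →L[ℝ] ℝ}

theorem Ortho.flip {u v : X} (h : Ortho D u v) : Ortho D v u := ⟨h.nv, h.nu, h.vu, h.uv⟩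

theorem ratio_aux (hD : DualMap D) {u v w x x' : X} (hu : Ortho D u w) (hv : Ortho D v w)
    (hx : x ≠ 0) (hx' : x' ≠ 0) (c d : ℝ) (h : x' = c • x + d • w) :
    D x v * D x' u = D x u * D x' v := by
  set p := D x v • u - D x u • v with hp
  by_cases hp0 : p = 0
  · have h1 := congrArg (D x') hp0
    simp [hp] at h1
    linarith
  · have h1 : D p x = 0 := hD.sym _ _ hx hp0 (by simp [hp]; ring)
    have h2 : D p w = 0 := hD.sym _ _ (nz hu.nv) hp0 (by simp [hp, hu.vu, hv.vu])
    have h3 : D x' p = 0 := hD.sym _ _ hp0 hx' (by simp [h, h1, h2])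
    simp [hp] at h3
    linarith

theorem Ortho.D1 (hD : DualMap D) {u v : X} (h : Ortho D u v) (t : ℝ) : D u (u + t • v) = 1 := by
  simp [hD.self _ (nz h.nu), h.uv, h.nu]

theorem Ortho.D2 (hD : DualMap D) {u v : X} (h : Ortho D u v) (t : ℝ) : D v (u + t • v) = t := by
  simp [hD.self _ (nz h.nv), h.vu, h.nv]

theorem Ortho.ne (hD : DualMap D) {u v : X} (h : Ortho D u v) (t : ℝ) : u + t • v ≠ 0 := by
  intro h0
  have := h.D1 hD t
  simp [h0] at this

theorem Ortho.pos1 (hD : DualMap D) {u v : X} (h : Ortho D u v) (t : ℝ) :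
    0 < D (u + t • v) u := by
  have hne := h.ne hD t
  apply lt_of_le_of_ne
  · have h1 := hD.le _ hne (t • v)
    have h2 := hD.self _ hne
    have h3 : ‖t • v‖ ≤ ‖u + t • v‖ := by
      rw [norm_smul, h.nv, mul_one, Real.norm_eq_abs, abs_le']
      have a1 := hD.le _ (nz h.nv) (u + t • v)
      have a2 := hD.le _ (nz h.nv) (-(u + t • v))
      rw [map_neg, norm_neg] at a2
      rw [h.D2 hD] at a1 a2
      exact ⟨a1, a2⟩
    rw [map_add] at h2
    linarith
  · intro h0
    have := hD.sym _ _ hne (nz h.nu) h0.symm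
    rw [h.D1 hD] at this
    exact one_ne_zero this

theorem Ortho.nonneg2 (hD : DualMap D) {u v : X} (h : Ortho D u v) (t : ℝ) :
    0 ≤ t * D (u + t • v) v := by
  have hne := h.ne hD t
  have h1 := hD.le _ hne u
  have h2 := hD.self _ hne
  have h3 := hD.le _ (nz h.nu) (u + t • v)
  rw [h.D1 hD] at h3
  rw [map_add, map_smul, smul_eq_mul] at h2
  rw [h.nu] at h1
  linarith

theorem Ortho.ne2 (hD : DualMap D) {u v : X} (h : Ortho D u v) {t : ℝ} (ht : t ≠ 0) :
    D (u + t • v) v ≠ 0 := by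
  intro h0
  have := hD.sym _ _ (h.ne hD t) (nz h.nv) h0
  rw [h.D2 hD] at this
  exact ht this

noncomputable def phi (D : X → X →L[ℝ] ℝ) (u v : X) (t : ℝ) : ℝ :=
  D (u + t • v) v / D (u + t • v) u

theorem phi_mul (hD : DualMap D) {u v w : X} (h12 : Ortho D u v) (h13 : Ortho D u w)
    (h23 : Ortho D v w) (s : ℝ) {t : ℝ} (ht : t ≠ 0) :
    phi D u w s = phi D u v t * phi D v w (s / t) := by
  set x := u + t • v + s • w with hx
  have hDu : D u x = 1 := by simp [hx, hD.self _ (nz h12.nu), h12.uv, h13.uv, h12.nu]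
  have hDv : D v x = t := by simp [hx, hD.self _ (nz h12.nv), h12.vu, h23.uv, h12.nv]
  have hx0 : x ≠ 0 := by intro h0; simp [h0] at hDu
  have hxu : D x u ≠ 0 := by
    intro h0
    have := hD.sym _ _ hx0 (nz h12.nu) h0
    rw [hDu] at this; exact one_ne_zero this
  have hxv : D x v ≠ 0 := by
    intro h0
    have := hD.sym _ _ hx0 (nz h12.nv) h0
    rw [hDv] at this; exact ht this
  have r1 := ratio_aux hD (x := u + t • v) (x' := x) h13 h23 (h12.ne hD t) hx0 1 s (by simp [hx])
  have r2 := ratio_aux hD (x := u + s • w) (x' := x) h12 h23.flip (h13.ne hD s) hx0 1 t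
    (by simp [hx]; abel)
  have r3 := ratio_aux hD (x := v + (s / t) • w) (x' := x) h12.flip h13.flip (h23.ne hD _) hx0 t 1
    (by simp [hx, smul_smul, mul_div_cancel₀ _ ht]; abel)
  have p1 := h12.pos1 hD t
  have p2 := h13.pos1 hD s
  have p3 := h23.pos1 hD (s / t)
  have q1 : phi D u v t = D x v / D x u := by
    unfold phi; rw [div_eq_div_iff p1.ne' hxu]; linarith
  have q2 : phi D u w s = D x w / D x u := by
    unfold phi; rw [div_eq_div_iff p2.ne' hxu]; linarith
  have q3 : phi D v w (s / t) = D x w / D x v := by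
    unfold phi; rw [div_eq_div_iff p3.ne' hxv]; linarith
  rw [q1, q2, q3]
  field_simp

theorem phi_sym (hD : DualMap D) {u v : X} (h : Ortho D u v) {t : ℝ} (ht : t ≠ 0) :
    phi D u v (-1 / phi D u v t) = -1 / t := by
  have p1 := (h.pos1 hD t).ne'
  have p2 := h.ne2 hD ht
  set z := -1 / phi D u v t with hz
  have h1 : D (u + t • v) (u + z • v) = 0 := by
    rw [map_add, map_smul, smul_eq_mul, hz, phi]
    field_simp
    ring
  have h2 := hD.sym _ _ (h.ne hD t) (h.ne hD z) h1
  have p3 := (h.pos1 hD z).ne'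
  rw [map_add, map_smul, smul_eq_mul] at h2
  rw [phi, div_eq_div_iff p3 ht]
  linarith

theorem phi_mono (hD : DualMap D) {u v : X} (h : Ortho D u v) {t t' : ℝ} (ht : 0 < t)
    (htt : t < t') : phi D u v t ≤ phi D u v t' := by
  have p := h.pos1 hD t
  have p' := h.pos1 hD t'
  have n := h.nonneg2 hD t
  have a1 := hD.self _ (h.ne hD t)
  have a2 := hD.self _ (h.ne hD t')
  have b1 := hD.le _ (h.ne hD t) (u + t' • v)
  have b2 := hD.le _ (h.ne hD t') (u + t • v)
  rw [← a2] at b1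
  rw [← a1] at b2
  rw [map_add, map_smul, smul_eq_mul, map_add, map_smul, smul_eq_mul] at b1 b2
  unfold phi
  generalize D (u + t • v) u = F1 at *
  generalize D (u + t • v) v = F2 at *
  generalize D (u + t' • v) u = G1 at *
  generalize D (u + t' • v) v = G2 at *
  have n2 : 0 ≤ F2 := nonneg_of_mul_nonneg_right n ht
  have c1 : F2 ≤ G2 := by
    have : (t' - t) * F2 ≤ (t' - t) * G2 := by linarith
    exact le_of_mul_le_mul_left this (by linarith)
  have c2 : G1 ≤ F1 := by
    have k1 := mul_le_mul_of_nonneg_left b1 ht.le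
    have k2 := mul_le_mul_of_nonneg_left b2 (ht.trans htt).le
    have : (t' - t) * G1 ≤ (t' - t) * F1 := by linarith
    exact le_of_mul_le_mul_left this (by linarith)
  exact div_le_div₀ (n2.trans c1) c1 p' c2

theorem phi_lin (hD : DualMap D) {u v w : X} (h12 : Ortho D u v) (h13 : Ortho D u w)
    (h23 : Ortho D v w) : ∃ a : ℝ, 0 < a ∧ ∀ t, phi D u v t = a * t := by
  have hmul := fun s {t : ℝ} (ht : t ≠ 0) => phi_mul hD h12 h13 h23 s ht
  have hne : ∀ t, t ≠ 0 → phi D u v t ≠ 0 := fun t ht =>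
    div_ne_zero (h12.ne2 hD ht) (h12.pos1 hD t).ne'
  have hpos : ∀ t, 0 < t → 0 < phi D u v t := fun t ht => by
    refine lt_of_le_of_ne ?_ (hne t ht.ne').symm
    exact div_nonneg (nonneg_of_mul_nonneg_right (h12.nonneg2 hD t) ht) (h12.pos1 hD t).le
  have hneg : phi D u v (-1) < 0 := by
    refine lt_of_le_of_ne ?_ (hne (-1) (by norm_num))
    have := h12.nonneg2 hD (-1)
    exact div_nonpos_of_nonpos_of_nonneg (by linarith) (h12.pos1 hD (-1)).le
  have hsym := fun {t : ℝ} (ht : t ≠ 0) => phi_sym hD h12 ht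
  have hmono := fun {t t' : ℝ} (ht : 0 < t) (h : t < t') => phi_mono hD h12 ht h
  have h0 : phi D u v 0 = 0 := by simp [phi, h12.uv]
  have hb : phi D v w 1 ≠ 0 := div_ne_zero (h23.ne2 hD one_ne_zero) (h23.pos1 hD 1).ne'
  set b := phi D v w 1
  set a := phi D u v 1 with ha
  have hapos : 0 < a := hpos 1 one_pos
  have key : ∀ s t, t ≠ 0 → a * phi D u v s = phi D u v t * phi D u v (s / t) := by
    intro s t ht
    have e0 : ∀ r, r ≠ 0 → b * phi D u v r = a * phi D v w r := by
      intro r hr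
      have e1 := hmul r hr
      have e2 := hmul r one_ne_zero
      rw [div_self hr] at e1
      rw [div_one] at e2
      linarith
    by_cases hs : s = 0
    · simp [hs, h0]
    have e1 := hmul s ht
    have e2 := hmul s one_ne_zero
    rw [div_one] at e2
    have e3 := e0 s hs
    have e4 := e0 (s / t) (div_ne_zero hs ht)
    have : b * (a * phi D u v s) = b * (phi D u v t * phi D u v (s / t)) := by
      calc b * (a * phi D u v s) = a * (b * phi D u v s) := by ring
        _ = a * (phi D u v t * phi D v w (s / t)) := by rw [e3, ← e1, e2]
        _ = phi D u v t * (a * phi D v w (s / t)) := by ring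
        _ = b * (phi D u v t * phi D u v (s / t)) := by rw [← e4]; ring
    exact mul_left_cancel₀ hb this
  have hm1 : phi D u v (-1) = -a := by
    have := key 1 (-1) (by norm_num)
    rw [show (1 : ℝ) / (-1) = -1 by norm_num, ← ha] at this
    nlinarith
  have hodd : ∀ s, phi D u v (-s) = - phi D u v s := by
    intro s
    have := key s (-1) (by norm_num)
    rw [hm1, show s / (-1) = -s by ring] at this
    have : a * phi D u v s = a * (- phi D u v (-s)) := by linarith
    have := mul_left_cancel₀ hapos.ne' this
    linarith
  have hposlin : ∀ t, 0 < t → phi D u v t = a * t := by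
    intro t ht
    have hψ : 0 < phi D u v t / a := div_pos (hpos t ht) hapos
    -- the normalised map is an involution
    have inv : phi D u v (phi D u v t / a) = a * t := by
      have k1 := key (-1 / a) (phi D u v t / a) hψ.ne'
      have s1 := hsym (t := 1) one_ne_zero
      rw [← ha] at s1
      have s2 := hsym (t := t) ht.ne'
      have e : -1 / a / (phi D u v t / a) = -1 / phi D u v t := by
        have := (hpos t ht).ne'
        field_simp
      rw [e, s1, s2] at k1
      field_simp at k1
      linarith
    rcases lt_trichotomy (phi D u v t / a) t with hlt | heq | hgt
    · have := hmono hψ hlt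
      rw [inv] at this
      rw [div_lt_iff₀ hapos] at hlt
      linarith
    · rw [div_eq_iff hapos.ne'] at heq; linarith
    · have := hmono ht hgt
      rw [inv] at this
      rw [lt_div_iff₀ hapos] at hgt
      linarith
  refine ⟨a, hapos, fun t => ?_⟩
  rcases lt_trichotomy t 0 with ht | ht | ht
  · have := hposlin (-t) (by linarith)
    rw [hodd] at this
    linarith
  · simp [ht, h0]
  · exact hposlin t ht

theorem norm_core (hD : DualMap D) {u v w : X} (h12 : Ortho D u v) (h13 : Ortho D u w)
    (h23 : Ortho D v w) (t : ℝ) : ‖u + t • v‖ ^ 2 = 1 + t ^ 2 := by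
  obtain ⟨a, ha, hlin⟩ := phi_lin hD h12 h13 h23
  set N : ℝ → ℝ := fun t => ‖u + t • v‖ with hN
  have hNle : ∀ t, N t ≤ 1 + |t| := fun t => by
    calc ‖u + t • v‖ ≤ ‖u‖ + ‖t • v‖ := norm_add_le _ _
      _ = 1 + |t| := by rw [norm_smul, h12.nu, h12.nv, mul_one, Real.norm_eq_abs]
  have hNge : ∀ t, t - 1 ≤ N t := fun t => by
    have : t ≤ N t := by
      have := hD.le _ (nz h12.nv) (u + t • v)
      rwa [h12.D2 hD] at this
    linarith
  have hN0 : ∀ t, 0 < N t := fun t => norm_pos_iff.2 (h12.ne hD t)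
  have hM : ∀ t, 0 < 1 + a * t ^ 2 := fun t => by positivity
  have hineq : ∀ t s, N t * (1 + a * t * s) ≤ N s * (1 + a * t ^ 2) := by
    intro t s
    have p := h12.pos1 hD t
    have l := hlin t
    rw [phi, div_eq_iff p.ne'] at l
    have a1 := hD.self _ (h12.ne hD t)
    have b1 := hD.le _ (h12.ne hD t) (u + s • v)
    rw [map_add, map_smul, smul_eq_mul, l] at a1 b1
    change _ = N t at a1
    change _ ≤ N s at b1
    have := mul_le_mul_of_nonneg_right b1 (hM t).le
    rw [← a1]
    linarith
  set Q : ℝ → ℝ := fun t => N t ^ 2 / (1 + a * t ^ 2) with hQ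
  set K : ℝ := 2 * (1 + 1 / a) with hK
  have hQ0 : ∀ t, 0 ≤ Q t := fun t => div_nonneg (sq_nonneg _) (hM t).le
  have hQK : ∀ t, Q t ≤ K := fun t => by
    rw [hQ]; simp only
    rw [div_le_iff₀ (hM t)]
    have h1 : N t ^ 2 ≤ 2 * (1 + t ^ 2) := by
      have : N t ^ 2 ≤ (1 + |t|) ^ 2 := pow_le_pow_left₀ (hN0 t).le (hNle t) 2
      have e := sq_abs t
      nlinarith [sq_nonneg (1 - |t|)]
    have h2 : K * (1 + a * t ^ 2) = 2 * (1 + t ^ 2) + 2 * (1 / a) + 2 * a * t ^ 2 := by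
      rw [hK]; field_simp; ring
    rw [h2]
    have : 0 < 1 / a := by positivity
    have : 0 ≤ 2 * a * t ^ 2 := by positivity
    linarith
  have hstep : ∀ t s, Q t - Q s ≤ K * a * (s - t) ^ 2 := by
    intro t s
    by_cases hc : 0 ≤ 1 + a * t * s
    · have h1 := hineq t s
      have h2 : (N t * (1 + a * t * s)) ^ 2 ≤ (N s * (1 + a * t ^ 2)) ^ 2 :=
        pow_le_pow_left₀ (mul_nonneg (hN0 t).le hc) h1 2
      have eT : N t ^ 2 = Q t * (1 + a * t ^ 2) := by
        rw [hQ]; simp only; rw [div_mul_cancel₀ _ (hM t).ne']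
      have eS : N s ^ 2 = Q s * (1 + a * s ^ 2) := by
        rw [hQ]; simp only; rw [div_mul_cancel₀ _ (hM s).ne']
      rw [mul_pow, mul_pow, eT, eS] at h2
      have h3 : Q t * (1 + a * t * s) ^ 2 ≤ Q s * ((1 + a * s ^ 2) * (1 + a * t ^ 2)) := by
        refine le_of_mul_le_mul_right ?_ (hM t)
        linarith
      have id : (1 + a * s ^ 2) * (1 + a * t ^ 2) = (1 + a * t * s) ^ 2 + a * (s - t) ^ 2 := by ring
      set P := (1 + a * s ^ 2) * (1 + a * t ^ 2) with hP
      have hP1 : 1 ≤ P := by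
        have : 0 ≤ a * s ^ 2 := by positivity
        have : 0 ≤ a * t ^ 2 := by positivity
        rw [hP]; nlinarith
      have h4 : (Q t - Q s) * P ≤ K * a * (s - t) ^ 2 := by
        have : (Q t - Q s) * P ≤ Q t * (a * (s - t) ^ 2) := by
          have : Q t * P = Q t * (1 + a * t * s) ^ 2 + Q t * (a * (s - t) ^ 2) := by rw [id]; ring
          linarith
        have h5 : Q t * (a * (s - t) ^ 2) ≤ K * (a * (s - t) ^ 2) :=
          mul_le_mul_of_nonneg_right (hQK t) (by positivity)
        linarith
      by_cases hs : Q t - Q s ≤ 0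
      · have : 0 ≤ K * a * (s - t) ^ 2 := by positivity
        linarith
      · nlinarith
    · push Not at hc
      have h1 : 1 ≤ a * (s - t) ^ 2 := by nlinarith [mul_nonneg ha.le (sq_nonneg (s + t))]
      have hK0 : 0 < K := by positivity
      have := hQK t
      have := hQ0 s
      nlinarith
  have habs : ∀ t s, ‖Q t - Q s‖ ≤ K * a * ‖t - s‖ ^ 2 := by
    intro t s
    rw [Real.norm_eq_abs, Real.norm_eq_abs, sq_abs, abs_le']
    have h1 := hstep t s
    have h2 := hstep s t
    constructor <;> nlinarith
  have hder : ∀ s, HasFDerivAt Q (0 : ℝ →L[ℝ] ℝ) s := by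
    intro s
    have h1 : (fun t => Q t - Q s) =O[nhds s] fun t => ‖t - s‖ ^ 2 := by
      refine Asymptotics.IsBigO.of_bound (K * a) (Filter.Eventually.of_forall fun t => ?_)
      have := habs t s
      simpa using this
    have h2 := h1.hasFDerivAt (𝕜 := ℝ) (by norm_num)
    simpa using h2.add_const (Q s)
  have hconst : ∀ t, Q t = 1 := by
    intro t
    have h1 := is_const_of_fderiv_eq_zero (𝕜 := ℝ) (f := Q)
      (fun s => (hder s).differentiableAt) (fun s => (hder s).fderiv) t 0
    rw [h1]
    simp [hQ, hN, h12.nu]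
  have hNsq : ∀ t, N t ^ 2 = 1 + a * t ^ 2 := by
    intro t
    have := hconst t
    rw [hQ] at this
    simp only at this
    rwa [div_eq_one_iff_eq (hM t).ne'] at this
  have ha1 : a = 1 := by
    apply le_antisymm
    · by_contra hc
      push Not at hc
      set r := 3 / (a - 1) with hr
      have hr0 : 0 < r := div_pos (by norm_num) (by linarith)
      have hr1 : (a - 1) * r = 3 := by rw [hr]; field_simp [show a - 1 ≠ 0 by linarith]
      have h1 := hNle r
      rw [abs_of_pos hr0] at h1
      have h2 := hNsq r
      have h3 : N r ^ 2 ≤ (1 + r) ^ 2 := pow_le_pow_left₀ (hN0 r).le h1 2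
      nlinarith
    · by_contra hc
      push Not at hc
      set r := 3 / (1 - a) with hr
      have hr0 : 0 < r := div_pos (by norm_num) (by linarith)
      have hr1 : (1 - a) * r = 3 := by rw [hr]; field_simp [show 1 - a ≠ 0 by linarith]
      have hr2 : 1 ≤ r := by nlinarith
      have h1 := hNge r
      have h2 := hNsq r
      have h3 : (r - 1) ^ 2 ≤ N r ^ 2 := pow_le_pow_left₀ (by linarith) h1 2
      nlinarith
  have := hNsq t
  rw [ha1, one_mul] at this
  exact this

theorem norm_comb (hD : DualMap D) {u v w : X} (h12 : Ortho D u v) (h13 : Ortho D u w)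
    (h23 : Ortho D v w) (p q : ℝ) : ‖p • u + q • v‖ ^ 2 = p ^ 2 + q ^ 2 := by
  by_cases hp : p = 0
  · simp [hp, norm_smul, h12.nv]
  · have : p • u + q • v = p • (u + (q / p) • v) := by
      rw [smul_add, smul_smul, mul_div_cancel₀ _ hp]
    rw [this, norm_smul, mul_pow, norm_core hD h12 h13 h23, Real.norm_eq_abs, sq_abs]
    field_simp

theorem parallelogram_of (hD : DualMap D) (hdim : 3 ≤ Module.rank ℝ X) (x y : X) :
    ‖x + y‖ ^ 2 + ‖x - y‖ ^ 2 = 2 * (‖x‖ ^ 2 + ‖y‖ ^ 2) := by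
  by_cases hx : x = 0
  · simp [hx]; ring
  have hnx : ‖x‖ ≠ 0 := norm_ne_zero_iff.2 hx
  set u := ‖x‖⁻¹ • x with hu
  have hu1 : ‖u‖ = 1 := by rw [hu, norm_smul, norm_inv, norm_norm, inv_mul_cancel₀ hnx]
  have hxu : x = ‖x‖ • u := by rw [hu, smul_smul, mul_inv_cancel₀ hnx, one_smul]
  set q := D u y with hq
  set z := y - q • u with hz
  have hDz : D u z = 0 := by simp [hz, hD.self _ (nz hu1), hu1, hq]
  have hy : y = q • u + z := by rw [hz]; abel
  generalize ‖x‖ = p at hxu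
  by_cases hz0 : z = 0
  · rw [hz0, add_zero] at hy
    rw [hxu, hy, ← add_smul, ← sub_smul]
    simp only [norm_smul, hu1, mul_one, Real.norm_eq_abs, sq_abs]
    ring
  have hnz : ‖z‖ ≠ 0 := norm_ne_zero_iff.2 hz0
  set v := ‖z‖⁻¹ • z with hv
  have hv1 : ‖v‖ = 1 := by rw [hv, norm_smul, norm_inv, norm_norm, inv_mul_cancel₀ hnz]
  have hzv : z = ‖z‖ • v := by rw [hv, smul_smul, mul_inv_cancel₀ hnz, one_smul]
  have huv : D u v = 0 := by simp [hv, hDz]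
  have h12 : Ortho D u v := ⟨hu1, hv1, huv, hD.sym _ _ (nz hu1) (nz hv1) huv⟩
  obtain ⟨w0, hw0, hw1, hw2⟩ : ∃ w : X, w ≠ 0 ∧ D u w = 0 ∧ D v w = 0 := by
    by_contra hcon
    push Not at hcon
    let L : X →ₗ[ℝ] (Fin 2 → ℝ) := LinearMap.pi ![(D u).toLinearMap, (D v).toLinearMap]
    have hinj : Function.Injective L := by
      rw [injective_iff_map_eq_zero]
      intro w hw
      by_contra hne
      have e0 : D u w = 0 := by simpa [L] using congrFun hw 0
      have e1 : D v w = 0 := by simpa [L] using congrFun hw 1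
      exact hcon w hne e0 e1
    have h1 := LinearMap.lift_rank_le_of_injective L hinj
    have h2 : Module.rank ℝ (Fin 2 → ℝ) = 2 := by simp
    rw [h2] at h1
    have h3 : Cardinal.lift.{0} (3 : Cardinal) ≤ Cardinal.lift.{0} (Module.rank ℝ X) :=
      Cardinal.lift_le.2 hdim
    have h4 := h3.trans h1
    norm_num at h4
  have hnw : ‖w0‖ ≠ 0 := norm_ne_zero_iff.2 hw0
  set w := ‖w0‖⁻¹ • w0 with hw
  have hw1' : ‖w‖ = 1 := by rw [hw, norm_smul, norm_inv, norm_norm, inv_mul_cancel₀ hnw]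
  have huw : D u w = 0 := by simp [hw, hw1]
  have hvw : D v w = 0 := by simp [hw, hw2]
  have h13 : Ortho D u w := ⟨hu1, hw1', huw, hD.sym _ _ (nz hu1) (nz hw1') huw⟩
  have h23 : Ortho D v w := ⟨hv1, hw1', hvw, hD.sym _ _ (nz hv1) (nz hw1') hvw⟩
  have key := norm_comb hD h12 h13 h23
  generalize ‖z‖ = r at hzv
  rw [hzv] at hy
  have e1 : x + y = (p + q) • u + r • v := by rw [hxu, hy]; module
  have e2 : x - y = (p - q) • u + (-r) • v := by rw [hxu, hy]; module
  rw [e1, e2, key, key, hy, key]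
  ring

theorem dualMap_of (hsm : SmoothSpace X)
    (h : ∀ (x : X) (G : Submodule ℝ X), Module.finrank ℝ G = 1 →
        ∃ g₀ ∈ G, (∀ g ∈ G, ‖x - g₀‖ ≤ ‖x - g‖) ∧ (∀ g ∈ G, ‖g₀ - g‖ ≤ ‖x - g‖)) :
    ∃ D : X → X →L[ℝ] ℝ, DualMap D := by
  have hex : ∀ x : X, ∃ f : X →L[ℝ] ℝ, x ≠ 0 → ‖f‖ = 1 ∧ f x = ‖x‖ := by
    intro x
    by_cases hx : x = 0
    · exact ⟨0, fun h => absurd hx h⟩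
    · obtain ⟨f, hf, -⟩ := hsm x hx
      exact ⟨f, fun _ => hf⟩
  choose D hD using hex
  refine ⟨D, ⟨fun x hx y => ?_, fun x hx => (hD x hx).2, fun y x hy hx hyx => ?_⟩⟩
  · have := (D x).le_opNorm y
    rw [(hD x hx).1, one_mul] at this
    exact (le_abs_self _).trans this
  · obtain ⟨g, hg, h1, h2⟩ := h x (Submodule.span ℝ {y}) (finrank_span_singleton hy)
    obtain ⟨c, rfl⟩ := Submodule.mem_span_singleton.1 hg
    have hc : D y (x - c • y) = 0 := by
      refine hb_aux hsm hy (fun s => ?_) _ (hD y hy).1 (hD y hy).2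
      by_cases hs : s = 0
      · simp [hs]
      have := h2 ((c - s⁻¹) • y) (Submodule.smul_mem _ _ (Submodule.mem_span_singleton_self y))
      have e1 : c • y - (c - s⁻¹) • y = s⁻¹ • y := by module
      have e2 : x - (c - s⁻¹) • y = s⁻¹ • (y + s • (x - c • y)) := by
        rw [smul_add, smul_smul, inv_mul_cancel₀ hs]; module
      rw [e1, e2, norm_smul, norm_smul] at this
      exact le_of_mul_le_mul_left this (norm_pos_iff.2 (inv_ne_zero hs))
    rw [map_sub, hyx, map_smul, (hD y hy).2, smul_eq_mul, zero_sub, neg_eq_zero,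
      mul_eq_zero, norm_eq_zero] at hc
    have hc0 : c = 0 := hc.resolve_right hy
    refine hb_aux hsm hx (fun s => ?_) _ (hD x hx).1 (hD x hx).2
    have := h1 ((-s) • y) (Submodule.smul_mem _ _ (Submodule.mem_span_singleton_self y))
    rw [hc0, zero_smul, sub_zero, neg_smul, sub_neg_eq_add] at this
    exact this

theorem forward_aux {X : Type*} [NormedAddCommGroup X] [InnerProductSpace ℝ X]
    (x : X) (G : Submodule ℝ X) (hG : Module.finrank ℝ G = 1) :
    ∃ g₀ ∈ G, (∀ g ∈ G, ‖x - g₀‖ ≤ ‖x - g‖) ∧ (∀ g ∈ G, ‖g₀ - g‖ ≤ ‖x - g‖) := by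
  have : FiniteDimensional ℝ G := Module.finite_of_finrank_eq_succ hG
  obtain ⟨g₀, hg₀, hperp⟩ : ∃ g₀ ∈ G, ∀ g ∈ G, inner ℝ (x - g₀) g = 0 :=
    ⟨G.starProjection x, by simp, fun g hg => G.starProjection_inner_eq_zero x g hg⟩
  have key : ∀ g ∈ G, ‖x - g‖ ^ 2 = ‖x - g₀‖ ^ 2 + ‖g₀ - g‖ ^ 2 := by
    intro g hg
    have e : x - g = (x - g₀) + (g₀ - g) := by abel
    rw [e, norm_add_sq_real, hperp _ (G.sub_mem hg₀ hg)]
    ring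
  refine ⟨g₀, hg₀, fun g hg => ?_, fun g hg => ?_⟩
  · exact le_of_sq_le_sq (by nlinarith [key g hg, sq_nonneg ‖g₀ - g‖]) (norm_nonneg _)
  · exact le_of_sq_le_sq (by nlinarith [key g hg, sq_nonneg ‖x - g₀‖]) (norm_nonneg _)

theorem inner_of_parallelogram
    (h : ∀ x y : X, ‖x + y‖ ^ 2 + ‖x - y‖ ^ 2 = 2 * (‖x‖ ^ 2 + ‖y‖ ^ 2)) :
    ∃ I : InnerProductSpace ℝ X, I.toNormedSpace = ‹NormedSpace ℝ X› :=
  ⟨InnerProductSpace.ofNorm ℝ (fun x y => by have := h x y; simp only [pow_two] at this; exact this),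
    rfl⟩

theorem parallelogram_inner {X : Type*} [NormedAddCommGroup X] (I : InnerProductSpace ℝ X)
    (x y : X) : ‖x + y‖ ^ 2 + ‖x - y‖ ^ 2 = 2 * (‖x‖ ^ 2 + ‖y‖ ^ 2) := by
  have := parallelogram_law_with_norm ℝ x y
  exact this

end helpers

theorem stmt_3 {X : Type*} [NormedAddCommGroup X] [NormedSpace ℝ X] [StrictConvexSpace ℝ X]
    (hsm : SmoothSpace X) (hdim : 3 ≤ Module.rank ℝ X) :
    Nonempty (InnerProductSpace ℝ X) ↔
      ∀ (x : X) (G : Submodule ℝ X), Module.finrank ℝ G = 1 →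
        ∃ g₀ ∈ G, (∀ g ∈ G, ‖x - g₀‖ ≤ ‖x - g‖) ∧ (∀ g ∈ G, ‖g₀ - g‖ ≤ ‖x - g‖) := by
  constructor
  · rintro ⟨I⟩
    obtain ⟨I', hI'⟩ := inner_of_parallelogram (X := X) (parallelogram_inner I)
    subst hI'
    exact forward_aux
  · intro h
    obtain ⟨D, hD⟩ := dualMap_of hsm h
    obtain ⟨I, -⟩ := inner_of_parallelogram (X := X) (parallelogram_of hD hdim)
    exact ⟨I⟩
end

section
/- Let X be a finite dimensional real smooth normed linear space with dim X = n ≥ 3. Then the norm of X arises from an inner product if and only if for every unit vector e of X there exists a strongly orthonormal Hamel basis {e_1, e_2, ..., e_n} of X in the sense of Birkhoff-James containing e such that for each i ∈ {1, ..., n}, the zero vector θ is the best coapproximation to e_i out of span{e_1, ..., e_{i-1}, e_{i+1}, ..., e_n}. -/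
/-- `x` together with the family is strongly orthonormal *relative to* the element `x i₀`
in the sense of Birkhoff-James: all members are unit vectors and
`‖x i₀‖ < ‖x i₀ + ∑_{j ≠ i₀} c j • x j‖` whenever not all the `c j` (`j ≠ i₀`) vanish. -/
def StronglyOrthRel {X : Type*} [NormedAddCommGroup X] [NormedSpace ℝ X]
    {n : ℕ} (x : Fin n → X) (i₀ : Fin n) : Prop :=
  (∀ i, ‖x i‖ = 1) ∧
    ∀ c : Fin n → ℝ, (∃ j, j ≠ i₀ ∧ c j ≠ 0) →
      ‖x i₀‖ < ‖x i₀ + ∑ j ∈ Finset.univ.erase i₀, c j • x j‖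

/-- A finite family of unit vectors that is strongly orthonormal in the sense of
Birkhoff-James. -/
def StronglyOrthSet {X : Type*} [NormedAddCommGroup X] [NormedSpace ℝ X]
    {n : ℕ} (x : Fin n → X) : Prop :=
  ∀ i, StronglyOrthRel x i


open Filter Topology

def BJ {X : Type*} [NormedAddCommGroup X] [NormedSpace ℝ X] (x y : X) : Prop :=
  ∀ t : ℝ, ‖x‖ ≤ ‖x + t • y‖

structure NormingMap {X : Type*} [NormedAddCommGroup X] [NormedSpace ℝ X]
    (f : X → X →L[ℝ] ℝ) : Prop where
  le : ∀ x, ‖f x‖ ≤ 1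
  eq : ∀ x, f x x = ‖x‖
  uniq : ∀ x, x ≠ 0 → ∀ g : X →L[ℝ] ℝ, ‖g‖ ≤ 1 → g x = ‖x‖ → g = f x

section
variable {X : Type*} [NormedAddCommGroup X] [NormedSpace ℝ X]

theorem exists_normingMap (hsm : SmoothSpace X) : ∃ f : X → X →L[ℝ] ℝ, NormingMap f := by
  have h : ∀ x : X, ∃ f : X →L[ℝ] ℝ, ‖f‖ ≤ 1 ∧ f x = ‖x‖ ∧
      (x ≠ 0 → ∀ g : X →L[ℝ] ℝ, ‖g‖ ≤ 1 → g x = ‖x‖ → g = f) := by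
    intro x
    by_cases hx : x = 0
    · exact ⟨0, by simp, by simp [hx], fun h => absurd hx h⟩
    · obtain ⟨f, ⟨hf1, hf2⟩, hu⟩ := hsm x hx
      refine ⟨f, hf1.le, hf2, fun _ g hg hgx => hu g ⟨le_antisymm hg ?_, hgx⟩⟩
      have h1 := g.le_opNorm x
      rw [hgx, norm_norm] at h1
      have h2 : 0 < ‖x‖ := norm_pos_iff.2 hx
      exact le_of_mul_le_mul_right (by simpa using h1) h2
  choose f h1 h2 h3 using h
  exact ⟨f, h1, h2, h3⟩

theorem NormingMap.apply_le {f : X → X →L[ℝ] ℝ} (hf : NormingMap f) (x y : X) :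
    |f x y| ≤ ‖y‖ := by
  have := (f x).le_of_opNorm_le (hf.le x) y
  simpa using this

theorem NormingMap.tendsto [FiniteDimensional ℝ X] {f : X → X →L[ℝ] ℝ} (hf : NormingMap f)
    (x : X) (hx : x ≠ 0) : Tendsto f (𝓝 x) (𝓝 (f x)) := by
  haveI : ProperSpace (X →L[ℝ] ℝ) := FiniteDimensional.proper ℝ _
  refine (isCompact_closedBall (0 : X →L[ℝ] ℝ) 1).tendsto_nhds_of_unique_mapClusterPt
    (Eventually.of_forall fun y => by simpa using hf.le y) ?_
  intro g hg hcl
  refine hf.uniq x hx g (by simpa using hg) ?_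
  have h1 : MapClusterPt (g x) (𝓝 x) (fun y => f y x) :=
    hcl.continuousAt_comp (f := fun g : X →L[ℝ] ℝ => g x) (by fun_prop)
  have h2 : Tendsto (fun y => f y x) (𝓝 x) (𝓝 ‖x‖) := by
    rw [tendsto_iff_norm_sub_tendsto_zero]
    have h3 : Tendsto (fun y => 2 * ‖y - x‖) (𝓝 x) (𝓝 0) := by
      have : Continuous fun y : X => 2 * ‖y - x‖ := by fun_prop
      simpa using this.tendsto x
    refine squeeze_zero (fun _ => norm_nonneg _) (fun y => ?_) h3
    have h4 := hf.apply_le y (y - x)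
    rw [map_sub, hf.eq] at h4
    have h5 := abs_norm_sub_norm_le y x
    rw [Real.norm_eq_abs]
    rw [abs_le] at h4 h5 ⊢
    constructor <;> linarith [h4.1, h4.2, h5.1, h5.2]
  have h3 : ClusterPt (g x) (map (fun y => f y x) (𝓝 x)) := h1
  have h4 : ClusterPt (g x) (𝓝 ‖x‖) := h3.mono h2
  exact eq_of_nhds_neBot h4

theorem NormingMap.hasFDerivAt [FiniteDimensional ℝ X] {f : X → X →L[ℝ] ℝ} (hf : NormingMap f)
    (x : X) (hx : x ≠ 0) : HasFDerivAt (fun y : X => ‖y‖) (f x) x := by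
  refine HasFDerivAt.of_isLittleO ?_
  rw [Asymptotics.isLittleO_iff]
  intro c hc
  have h := (Metric.tendsto_nhds.1 (hf.tendsto x hx)) c hc
  filter_upwards [h] with y hy
  rw [dist_eq_norm] at hy
  have h1 := (f y - f x).le_of_opNorm_le hy.le (y - x)
  rw [sub_apply] at h1
  have h2 := (abs_le.1 (hf.apply_le x y)).2
  have h3 := (abs_le.1 (hf.apply_le y x)).2
  rw [Real.norm_eq_abs] at h1 ⊢
  have h4 := hf.eq x
  have h5 := hf.eq y
  have h6 := (abs_le.1 h1).2
  simp only [map_sub] at h6 ⊢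
  rw [abs_le]
  constructor
  · have : 0 ≤ c * ‖y - x‖ := by positivity
    linarith
  · linarith

theorem NormingMap.bj_iff [FiniteDimensional ℝ X] {f : X → X →L[ℝ] ℝ} (hf : NormingMap f)
    (x : X) (hx : x ≠ 0) (y : X) : BJ x y ↔ f x y = 0 := by
  constructor
  · intro h
    have h1 : HasDerivAt (fun t : ℝ => x + t • y) y 0 := by
      simpa using ((hasDerivAt_id (0 : ℝ)).smul_const y).const_add x
    have h2 : HasDerivAt (fun t : ℝ => ‖x + t • y‖) (f x y) 0 := by
      have := hf.hasFDerivAt x hx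
      have h3 : HasFDerivAt (fun y : X => ‖y‖) (f x) (x + (0 : ℝ) • y) := by simpa using this
      exact h3.comp_hasDerivAt (0 : ℝ) h1
    refine IsLocalMin.hasDerivAt_eq_zero (Eventually.of_forall fun t => ?_) h2
    simpa using h t
  · intro h t
    have := (abs_le.1 (hf.apply_le x (x + t • y))).2
    simpa [h, hf.eq] using this

theorem BJ.smul_left {x y : X} (h : BJ x y) (c : ℝ) : BJ (c • x) y := by
  intro t
  by_cases hc : c = 0
  · simp [hc]
  · have := h (t / c)
    have h2 : c • x + t • y = c • (x + (t / c) • y) := by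
      rw [smul_add, smul_smul]; congr 2; field_simp
    rw [h2, norm_smul, norm_smul]
    gcongr

theorem BJ.smul_right {x y : X} (h : BJ x y) (c : ℝ) : BJ x (c • y) := by
  intro t
  rw [smul_smul]; exact h _

/-- bundled facts about the orthogonality relation -/
structure Good (X : Type*) [NormedAddCommGroup X] [NormedSpace ℝ X] : Prop where
  symm : ∀ x y : X, BJ x y → BJ y x
  add : ∀ x y z : X, BJ x y → BJ x z → BJ x (y + z)
  ex : ∀ x y : X, ∃ m : X, ‖m‖ = 1 ∧ BJ x m ∧ BJ y m
  proj : ∀ x y : X, ∃ a : ℝ, BJ x (y - a • x)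
  const : ∀ e h k : X, BJ e h → BJ e k → ‖h‖ = ‖k‖ → ‖e + h‖ = ‖e + k‖

theorem bj_zero_left (y : X) : BJ 0 y := fun t => by simp
theorem bj_zero_right (y : X) : BJ y 0 := fun t => by simp

theorem exists_common [FiniteDimensional ℝ X] {f : X → X →L[ℝ] ℝ} (hf : NormingMap f)
    (hd : 3 ≤ Module.finrank ℝ X) (x y : X) : ∃ m : X, ‖m‖ = 1 ∧ BJ x m ∧ BJ y m := by
  have h : (LinearMap.prod (f x : X →ₗ[ℝ] ℝ) (f y : X →ₗ[ℝ] ℝ)).ker ≠ ⊥ := by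
    apply LinearMap.ker_ne_bot_of_finrank_lt
    simp; omega
  obtain ⟨v, hv, hv0⟩ := Submodule.exists_mem_ne_zero_of_ne_bot h
  simp only [LinearMap.mem_ker, LinearMap.prod_apply, Function.prod, Prod.mk_eq_zero,
    ContinuousLinearMap.coe_coe] at hv
  have key : ∀ z, f z v = 0 → BJ z v := by
    intro z hz
    by_cases hz0 : z = 0
    · rw [hz0]; exact bj_zero_left v
    · exact (hf.bj_iff z hz0 v).2 hz
  refine ⟨‖v‖⁻¹ • v, norm_smul_inv_norm (𝕜 := ℝ) hv0, (key x hv.1).smul_right _,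
    (key y hv.2).smul_right _⟩

theorem const_aux [FiniteDimensional ℝ X] {f : X → X →L[ℝ] ℝ} (hf : NormingMap f)
    (symm : ∀ x y : X, BJ x y → BJ y x) (add : ∀ x y z : X, BJ x y → BJ x z → BJ x (y + z))
    (e h k : X) (he : e ≠ 0) (h1 : BJ e h) (h2 : BJ e k) (hn : ‖h‖ = 1) (kn : ‖k‖ = 1)
    (hli : ∀ s : ℝ, h + s • (k - h) ≠ 0) (r : ℝ) (hr : r ≠ 0) :
    ‖e + r • h‖ = ‖e + r • k‖ := by
  set σ : ℝ → X := fun s => h + s • (k - h) with hσ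
  have dσ : ∀ s, HasDerivAt σ (k - h) s := fun s => by
    have := ((hasDerivAt_id s).smul_const (k - h)).const_add h
    rw [one_smul] at this
    exact this
  have dN : ∀ s, DifferentiableAt ℝ (fun s => ‖σ s‖⁻¹) s := fun s => by
    have := ((hf.hasFDerivAt (σ s) (hli s)).comp_hasDerivAt s (dσ s)).differentiableAt
    exact DifferentiableAt.inv (h := fun s => ‖σ s‖) this (norm_ne_zero_iff.2 (hli s))
  set γ : ℝ → X := fun s => ‖σ s‖⁻¹ • σ s with hγ
  have dγ : ∀ s, HasDerivAt γ (deriv γ s) s := fun s =>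
    ((dN s).smul (dσ s).differentiableAt).hasDerivAt
  have nγ : ∀ s, ‖γ s‖ = 1 := fun s => norm_smul_inv_norm (𝕜 := ℝ) (hli s)
  have zγ : ∀ s, γ s ≠ 0 := fun s h => by have := nγ s; simp [h] at this
  have oγ : ∀ s, BJ e (γ s) := fun s => by
    refine BJ.smul_right (add _ _ _ h1 (BJ.smul_right ?_ _)) _
    rw [sub_eq_add_neg, ← neg_one_smul ℝ h]
    exact add _ _ _ h2 (h1.smul_right _)
  have d1 : ∀ s, f (γ s) (deriv γ s) = 0 := fun s => by
    have a := (hf.hasFDerivAt (γ s) (zγ s)).comp_hasDerivAt s (dγ s)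
    have b : ((fun y : X => ‖y‖) ∘ γ) = fun _ => (1 : ℝ) := by ext s; exact nγ s
    rw [b] at a
    exact a.unique (hasDerivAt_const s (1 : ℝ))
  have d2 : ∀ s, f e (deriv γ s) = 0 := fun s => by
    have a := (f e).hasFDerivAt.comp_hasDerivAt s (dγ s)
    have b : (f e ∘ γ) = fun _ => (0 : ℝ) := by
      ext s; exact (hf.bj_iff e he _).1 (oγ s)
    rw [b] at a
    exact a.unique (hasDerivAt_const s (0 : ℝ))
  have zz : ∀ s, e + r • γ s ≠ 0 := fun s hs => by
    have a : f e (e + r • γ s) = 0 := by rw [hs]; simp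
    rw [map_add, map_smul, (hf.bj_iff e he _).1 (oγ s), hf.eq] at a
    simp at a; exact he a
  have d3 : ∀ s, f (e + r • γ s) (deriv γ s) = 0 := fun s => by
    rw [← hf.bj_iff _ (zz s)]
    apply symm
    exact add _ _ _ (symm _ _ ((hf.bj_iff e he _).2 (d2 s)))
      ((symm _ _ ((hf.bj_iff _ (zγ s) _).2 (d1 s))).smul_right r)
  have d4 : ∀ s, HasDerivAt (fun s => ‖e + r • γ s‖) 0 s := fun s => by
    have a := (hf.hasFDerivAt _ (zz s)).comp_hasDerivAt s (((dγ s).const_smul r).const_add e)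
    rw [map_smul, d3 s, smul_zero] at a
    exact a
  have := is_const_of_deriv_eq_zero (fun s => (d4 s).differentiableAt) (fun s => (d4 s).deriv) 0 1
  simpa [hγ, hσ, hn, kn] using this

theorem good_of_symm [FiniteDimensional ℝ X] {f : X → X →L[ℝ] ℝ} (hf : NormingMap f)
    (hd : 3 ≤ Module.finrank ℝ X)
    (symm : ∀ x y : X, BJ x y → BJ y x) : Good X := by
  have add : ∀ x y z : X, BJ x y → BJ x z → BJ x (y + z) := by
    intro x y z h1 h2
    by_cases hx : x = 0
    · rw [hx]; exact bj_zero_left _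
    · rw [hf.bj_iff x hx] at *
      rw [map_add, h1, h2, add_zero]
  have neg : ∀ x y : X, BJ x y → BJ x (-y) := fun x y h => by
    simpa using h.smul_right (-1)
  refine ⟨symm, add, exists_common hf hd, ?_, ?_⟩
  · intro x y
    by_cases hx : x = 0
    · exact ⟨0, by rw [hx]; exact bj_zero_left _⟩
    · refine ⟨f x y / ‖x‖, ?_⟩
      rw [hf.bj_iff x hx, map_sub, map_smul, hf.eq, smul_eq_mul]
      have := norm_ne_zero_iff.2 hx
      field_simp; ring
  · intro e h k h1 h2 hn
    by_cases he : e = 0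
    · simp [he, hn]
    by_cases hr : ‖h‖ = 0
    · have hk : ‖k‖ = 0 := hn ▸ hr
      rw [norm_eq_zero] at hr hk
      rw [hr, hk]
    set r := ‖h‖ with hrdef
    -- reduce to unit vectors
    have unit : ∀ u v : X, BJ e u → BJ e v → ‖u‖ = 1 → ‖v‖ = 1 → ‖e + r • u‖ = ‖e + r • v‖ := by
      intro u v hu hv nu nv
      by_cases hli : ∀ s : ℝ, u + s • (v - u) ≠ 0
      · exact const_aux hf symm add e u v he hu hv nu nv hli r hr
      · push Not at hli
        obtain ⟨s, hs⟩ := hli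
        obtain ⟨m, nm, m1, m2⟩ := exists_common hf hd e u
        have m0 : m ≠ 0 := fun h => by simp [h] at nm
        -- v is orthogonal to m as well
        have hsv : s • v = (s - 1) • u := by
          have : s • v = (u + s • (v - u)) + (s - 1) • u := by module
          rw [this, hs, zero_add]
        have s0 : s ≠ 0 := fun h => by
          rw [h] at hsv; simp at hsv; rw [hsv] at nu; simp at nu
        have hv' : v = (s⁻¹ * (s - 1)) • u := by
          rw [mul_smul, ← hsv, smul_smul, inv_mul_cancel₀ s0, one_smul]
        have m3 : BJ v m := by rw [hv']; exact m2.smul_left _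
        have key : ∀ w : X, ‖w‖ = 1 → BJ w m → ∀ s : ℝ, w + s • (m - w) ≠ 0 := by
          intro w nw hw s hs
          have w0 : w ≠ 0 := fun h => by simp [h] at nw
          have a1 : f m (w + s • (m - w)) = 0 := by rw [hs]; simp
          have a2 : f w (w + s • (m - w)) = 0 := by rw [hs]; simp
          have b1 := (hf.bj_iff w w0 m).1 hw
          have b2 := (hf.bj_iff m m0 w).1 (symm _ _ hw)
          simp only [map_add, map_smul, map_sub, b1, b2, hf.eq, nm, nw, smul_eq_mul] at a1 a2
          linarith
        rw [const_aux hf symm add e u m he hu m1 nu nm (key u nu m2) r hr,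
          const_aux hf symm add e v m he hv m1 nv nm (key v nv m3) r hr]
    have := unit (r⁻¹ • h) (r⁻¹ • k) (h1.smul_right _) (h2.smul_right _)
      (by rw [norm_smul, norm_inv, norm_norm]; exact inv_mul_cancel₀ hr)
      (by rw [norm_smul, norm_inv, norm_norm, ← hn]; exact inv_mul_cancel₀ hr)
    simpa [smul_smul, hr] using this

theorem Good.norm_eq (G : Good X) (p q p' q' : X) (h : BJ p q) (h' : BJ p' q')
    (hp : ‖p‖ = ‖p'‖) (hq : ‖q‖ = ‖q'‖) : ‖p + q‖ = ‖p' + q'‖ := by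
  obtain ⟨m, nm, m1, m2⟩ := G.ex p p'
  have nn : ‖‖q‖ • m‖ = ‖q‖ := by simp [norm_smul, nm]
  calc ‖p + q‖ = ‖p + ‖q‖ • m‖ := G.const _ _ _ h (m1.smul_right _) nn.symm
    _ = ‖‖q‖ • m + p‖ := by rw [add_comm]
    _ = ‖‖q‖ • m + p'‖ := G.const _ _ _ (G.symm _ _ (m1.smul_right _))
        (G.symm _ _ (m2.smul_right _)) hp
    _ = ‖p' + ‖q‖ • m‖ := by rw [add_comm]
    _ = ‖p' + q'‖ := G.const _ _ _ (m2.smul_right _) h' (nn.trans hq)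

theorem mult_eq (b : ℕ → ℝ) (mono : Monotone b) (mul : ∀ m k, b (m * k) = b m * b k)
    (b1 : b 1 = 1) (b2 : b 2 = 2) (m : ℕ) (hm : m ≠ 0) : b m = m := by
  have hpow : ∀ a k, b (a ^ k) = b a ^ k := by
    intro a k
    induction k with
    | zero => simpa using b1
    | succ k ih => rw [pow_succ, mul, ih, pow_succ]
  have mp : (0 : ℝ) < m := by positivity
  have bm : 1 ≤ b m := b1 ▸ mono (Nat.one_le_iff_ne_zero.2 hm)
  have bp : 0 < b m := by linarith
  have key : ∀ k : ℕ, b m ^ k ≤ 2 * (m : ℝ) ^ k ∧ (m : ℝ) ^ k ≤ 2 * b m ^ k := by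
    intro k
    have h1 : 2 ^ Nat.log 2 (m ^ k) ≤ m ^ k := Nat.pow_log_le_self 2 (by positivity)
    have h2 : m ^ k ≤ 2 ^ (Nat.log 2 (m ^ k) + 1) :=
      (Nat.lt_pow_succ_log_self (by norm_num) _).le
    generalize Nat.log 2 (m ^ k) = j at h1 h2
    have h3 := mono h1
    have h4 := mono h2
    rw [hpow, hpow, b2] at h3 h4
    have h5 : (2 : ℝ) ^ j ≤ (m : ℝ) ^ k := by exact_mod_cast h1
    have h6 : (m : ℝ) ^ k ≤ 2 ^ (j + 1) := by exact_mod_cast h2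
    rw [pow_succ] at h4 h6
    constructor <;> linarith
  apply le_antisymm
  · by_contra! h
    obtain ⟨k, hk⟩ := pow_unbounded_of_one_lt (2 : ℝ) ((one_lt_div mp).2 h)
    rw [div_pow, lt_div_iff₀ (by positivity)] at hk
    linarith [(key k).1]
  · by_contra! h
    obtain ⟨k, hk⟩ := pow_unbounded_of_one_lt (2 : ℝ) ((one_lt_div bp).2 h)
    rw [div_pow, lt_div_iff₀ (by positivity)] at hk
    linarith [(key k).2]

theorem Good.pyth_aux (G : Good X) (e h k : X) (ne : ‖e‖ = 1) (nh : ‖h‖ = 1) (nk : ‖k‖ = 1)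
    (eh : BJ e h) (ek : BJ e k) (hk : BJ h k) (x y : ℝ) (hx : 0 ≤ x) (hy : 0 ≤ y) :
    ‖x • e + y • h‖ ^ 2 = x ^ 2 + y ^ 2 := by
  set g : ℝ → ℝ → ℝ := fun x y => ‖x • e + y • h‖ with hg
  have g0 : ∀ x y, 0 ≤ g x y := fun x y => norm_nonneg _
  have gval : ∀ p q : X, BJ p q → ‖p + q‖ = g ‖p‖ ‖q‖ := fun p q hpq =>
    G.norm_eq p q _ _ hpq ((eh.smul_left _).smul_right _) (by simp [norm_smul, ne])
      (by simp [norm_smul, nh])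
  have ghom : ∀ c x y, 0 ≤ c → g (c * x) (c * y) = c * g x y := by
    intro c x y hc
    simp only [hg]
    rw [mul_smul, mul_smul, ← smul_add, norm_smul, Real.norm_of_nonneg hc]
  have gassoc : ∀ x y z, 0 ≤ x → 0 ≤ z → g (g x y) z = g x (g y z) := by
    intro x y z hx hz
    have h1 : ‖(x • e + y • h) + z • k‖ = g (g x y) z := by
      rw [gval]
      · simp [norm_smul, nk, abs_of_nonneg hz, hg]
      · apply G.symm
        exact G.add _ _ _ (G.symm _ _ ((ek.smul_left _).smul_right _))
          (G.symm _ _ ((hk.smul_left _).smul_right _))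
    have h2 : ‖x • e + (y • h + z • k)‖ = g x (g y z) := by
      have h3 : ‖y • h + z • k‖ = g y z := by
        refine G.norm_eq _ _ _ _ ((hk.smul_left _).smul_right _) ((eh.smul_left _).smul_right _) ?_ ?_ <;>
        simp [norm_smul, nk, ne, nh]
      rw [gval, h3]
      · simp [norm_smul, ne, abs_of_nonneg hx]
      · exact G.add _ _ _ ((eh.smul_left _).smul_right _) ((ek.smul_left _).smul_right _)
    rw [← h1, ← h2, add_assoc]
  have gz : ∀ y, 0 ≤ y → g 0 y = y := fun y hy => by simp [hg, norm_smul, nh, abs_of_nonneg hy]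
  have gz' : ∀ y, 0 ≤ y → g y 0 = y := fun y hy => by simp [hg, norm_smul, ne, abs_of_nonneg hy]
  have g11 : g 1 1 ^ 2 = 2 := by
    have swap : ∀ a b : ℝ, ‖a • e + b • h‖ = ‖b • e + a • h‖ := by
      intro a b
      rw [add_comm (b • e)]
      refine G.norm_eq _ _ _ _ ((eh.smul_left _).smul_right _)
        (((G.symm _ _ eh).smul_left _).smul_right _) ?_ ?_ <;> simp [norm_smul, ne, nh]
    have orth : BJ (e + h) (e - h) := by
      intro t
      have a1 : e + h + t • (e - h) = (1 + t) • e + (1 - t) • h := by module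
      have a2 := swap (1 + t) (1 - t)
      have a3 : (2 : ℝ) • (e + h) = ((1 + t) • e + (1 - t) • h) + ((1 - t) • e + (1 + t) • h) := by
        module
      have a4 := norm_add_le ((1 + t) • e + (1 - t) • h) ((1 - t) • e + (1 + t) • h)
      rw [← a3, norm_smul, Real.norm_of_nonneg (by norm_num)] at a4
      rw [a1]; linarith
    have c1 : ‖e + h‖ = g 1 1 := by simp [hg]
    have c2 : ‖e - h‖ = g 1 1 := by
      rw [sub_eq_add_neg, gval, norm_neg, ne, nh]
      simpa using eh.smul_right (-1)
    have c3 := gval _ _ orth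
    have c4 : e + h + (e - h) = (2 : ℝ) • e := by module
    rw [c4, c1, c2, norm_smul, ne] at c3
    have c5 := ghom (g 1 1) 1 1 (g0 _ _)
    rw [mul_one] at c5
    rw [c5] at c3
    norm_num at c3
    rw [sq]; exact c3.symm
  let a : ℕ → ℝ := fun m => Nat.rec 0 (fun _ r => g r 1) m
  have a0 : a 0 = 0 := rfl
  have as : ∀ m, a (m + 1) = g (a m) 1 := fun m => rfl
  have an : ∀ m, 0 ≤ a m := by
    intro m
    cases m with
    | zero => exact le_rfl
    | succ m => exact g0 _ _
  have a1 : a 1 = 1 := by rw [show a 1 = g (a 0) 1 from as 0, a0, gz _ zero_le_one]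
  have aadd : ∀ m k, g (a m) (a k) = a (m + k) := by
    intro m k
    induction k with
    | zero => rw [a0, gz' _ (an m), add_zero]
    | succ k ih => rw [as, ← gassoc _ _ _ (an m) zero_le_one, ih, ← as, add_assoc]
  have amul : ∀ m k, a (m * k) = a m * a k := by
    intro m k
    induction k with
    | zero => simp [a0]
    | succ k ih => rw [mul_add, mul_one, ← aadd, ih, as, ← ghom _ _ _ (an m), mul_one]
  have amono : Monotone a := by
    refine monotone_nat_of_le_succ fun m => ?_
    rw [as]
    have := (eh.smul_left (a m)) 1
    rw [norm_smul, ne, Real.norm_of_nonneg (an m), mul_one] at this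
    exact this
  have asq : ∀ m : ℕ, a m ^ 2 = m := by
    intro m
    by_cases hm : m = 0
    · simp [hm, a0]
    refine mult_eq (fun m => a m ^ 2) ?_ ?_ ?_ ?_ m hm
    · intro i j hij
      exact pow_le_pow_left₀ (an i) (amono hij) 2
    · intro i j; simp only [amul, mul_pow]
    · simp [a1]
    · show a 2 ^ 2 = 2
      rw [show a 2 = g (a 1) 1 from as 1, a1, g11]
  have ghom2 : ∀ c x y, 0 ≤ c → (g (c * x) (c * y)) ^ 2 = c ^ 2 * g x y ^ 2 := by
    intro c x y hc; rw [ghom c x y hc, mul_pow]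
  have asqrt : ∀ m : ℕ, a m = √(m : ℝ) := fun m => by
    rw [← asq m, Real.sqrt_sq (an m)]
  have grat : ∀ q : ℚ, g (√|(q : ℝ)|) 1 ^ 2 = |(q : ℝ)| + 1 := by
    intro q
    have hd : (0 : ℝ) < q.den := by exact_mod_cast q.den_pos
    have e1 : |(q : ℝ)| = (q.num.natAbs : ℝ) / q.den := by
      conv_lhs => rw [Rat.cast_def, abs_div, abs_of_pos hd]
      rw [Nat.cast_natAbs, Int.cast_abs]
    have e2 : a q.den * √|(q : ℝ)| = a q.num.natAbs := by
      rw [asqrt, asqrt, ← Real.sqrt_mul hd.le, e1, mul_div_cancel₀ _ hd.ne']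
    have e3 := ghom2 (a q.den) (√|(q : ℝ)|) 1 (an _)
    rw [e2, mul_one, aadd, asq, asq] at e3
    rw [e1] at e3 ⊢
    push_cast at e3
    field_simp
    linarith
  have greal : ∀ r : ℝ, g (√|r|) 1 ^ 2 = |r| + 1 := by
    have := (Rat.denseRange_cast (𝕜 := ℝ)).equalizer (g := fun r : ℝ => g (√|r|) 1 ^ 2)
      (h := fun r : ℝ => |r| + 1) (by simp only [hg]; fun_prop) (by fun_prop)
      (by ext q; exact grat q)
    exact fun r => congrFun this r
  show g x y ^ 2 = _
  rcases hy.eq_or_lt with rfl | hy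
  · rw [gz' _ hx]; ring
  · have h1 := greal ((x / y) ^ 2)
    rw [abs_of_nonneg (by positivity), Real.sqrt_sq (by positivity)] at h1
    have h2 := ghom2 y (x / y) 1 hy.le
    rw [mul_div_cancel₀ _ hy.ne', mul_one, h1] at h2
    rw [h2]; field_simp

theorem Good.pyth (G : Good X) (p q : X) (hpq : BJ p q) :
    ‖p + q‖ ^ 2 = ‖p‖ ^ 2 + ‖q‖ ^ 2 := by
  obtain ⟨e, ne, -, -⟩ := G.ex 0 0
  obtain ⟨h, nh, eh, -⟩ := G.ex e e
  obtain ⟨k, nk, ek, hk⟩ := G.ex e h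
  rw [← G.pyth_aux e h k ne nh nk eh ek hk _ _ (norm_nonneg p) (norm_nonneg q)]
  congr 1
  exact G.norm_eq p q _ _ hpq ((eh.smul_left _).smul_right _) (by simp [norm_smul, ne])
      (by simp [norm_smul, nh])

theorem Good.parallelogram (G : Good X) (x y : X) :
    ‖x + y‖ * ‖x + y‖ + ‖x - y‖ * ‖x - y‖ = 2 * (‖x‖ * ‖x‖ + ‖y‖ * ‖y‖) := by
  obtain ⟨a, ha⟩ := G.proj x y
  set q := y - a • x with hq
  have hy : y = a • x + q := by rw [hq]; abel
  have key : ∀ c d : ℝ, ‖c • x + d • q‖ ^ 2 = c ^ 2 * ‖x‖ ^ 2 + d ^ 2 * ‖q‖ ^ 2 := by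
    intro c d
    rw [G.pyth _ _ ((ha.smul_left c).smul_right d), norm_smul, norm_smul, mul_pow, mul_pow]
    simp
  have e1 : x + y = (1 + a) • x + (1 : ℝ) • q := by rw [hy]; module
  have e2 : x - y = (1 - a) • x + (-1 : ℝ) • q := by rw [hy]; module
  have e3 : y = a • x + (1 : ℝ) • q := by rw [one_smul]; exact hy
  have k1 := key (1 + a) 1
  have k2 := key (1 - a) (-1)
  have k3 := key a 1
  rw [← e1] at k1
  rw [← e2] at k2
  rw [← e3] at k3
  nlinarith

end

theorem backward {X : Type*} [NormedAddCommGroup X] [NormedSpace ℝ X] {n : ℕ}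
    (hn : 3 ≤ n) (hdim : Module.finrank ℝ X = n) (hsm : SmoothSpace X)
    (H : ∀ e : X, ‖e‖ = 1 →
        ∃ b : Fin n → X,
          LinearIndependent ℝ b ∧ Submodule.span ℝ (Set.range b) = ⊤ ∧
          StronglyOrthSet b ∧ (∃ i, b i = e) ∧
          ∀ i : Fin n, ∀ g ∈ Submodule.span ℝ (b '' {j | j ≠ i}),
            ‖(0 : X) - g‖ ≤ ‖b i - g‖) : Nonempty (InnerProductSpace ℝ X) := by
  haveI : FiniteDimensional ℝ X := FiniteDimensional.of_finrank_pos (by omega)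
  obtain ⟨f, hf⟩ := exists_normingMap hsm
  have symm1 : ∀ x y : X, ‖x‖ = 1 → BJ x y → BJ y x := by
    intro e y he hy
    obtain ⟨b, -, hspan, hso, ⟨i, rfl⟩, hco⟩ := H e he
    have e0 : b i ≠ 0 := fun h => by simp [h] at he
    have hj : ∀ j, j ≠ i → f (b i) (b j) = 0 := by
      intro j hj
      rw [← hf.bj_iff _ e0]
      intro t
      by_cases ht : t = 0
      · simp [ht]
      have := (hso i).2 (Pi.single j t) ⟨j, hj, by simpa using ht⟩
      rw [Finset.sum_eq_single j] at this
      · simpa using this.le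
      · intro l _ hl; simp [hl]
      · intro h; simp [hj] at h
    have hmem : y ∈ Submodule.span ℝ (b '' {j | j ≠ i}) := by
      have hyt : y ∈ Submodule.span ℝ (Set.range b) := by rw [hspan]; trivial
      have hr : Set.range b = insert (b i) (b '' {j | j ≠ i}) := by
        ext z; constructor
        · rintro ⟨j, rfl⟩
          by_cases h : j = i
          · left; rw [h]
          · right; exact ⟨j, h, rfl⟩
        · rintro (rfl | ⟨j, -, rfl⟩) <;> exact ⟨_, rfl⟩
      rw [hr, Submodule.mem_span_insert] at hyt
      obtain ⟨a, z, hz, hyz⟩ := hyt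
      have hz0 : f (b i) z = 0 := by
        have : Submodule.span ℝ (b '' {j | j ≠ i}) ≤ (f (b i) : X →ₗ[ℝ] ℝ).ker := by
          rw [Submodule.span_le]
          rintro _ ⟨j, hj', rfl⟩
          exact hj j hj'
        exact this hz
      have h0 := (hf.bj_iff _ e0 y).1 hy
      rw [hyz, map_add, map_smul, hz0, hf.eq, he] at h0
      simp at h0
      rw [hyz, h0]; simpa using hz
    intro t
    by_cases ht : t = 0
    · simp [ht]
    have := hco i (-(t⁻¹) • y) (Submodule.smul_mem _ _ hmem)
    have e1 : y + t • b i = t • (b i - (-(t⁻¹) • y)) := by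
      rw [smul_sub, smul_smul]
      have : t * -t⁻¹ = -1 := by field_simp
      rw [this]; module
    have e2 : y = t • (0 - (-(t⁻¹) • y)) := by
      rw [smul_sub, smul_smul]
      have : t * -t⁻¹ = -1 := by field_simp
      rw [this]; module
    rw [e1]
    conv_lhs => rw [e2]
    rw [norm_smul, norm_smul]
    gcongr
  have symm : ∀ x y : X, BJ x y → BJ y x := by
    intro x y h
    by_cases hx : x = 0
    · rw [hx]; exact bj_zero_right _
    have h1 := symm1 (‖x‖⁻¹ • x) y (norm_smul_inv_norm (𝕜 := ℝ) hx) (h.smul_left _)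
    have h2 := h1.smul_right ‖x‖
    rwa [smul_smul, mul_inv_cancel₀ (norm_ne_zero_iff.2 hx), one_smul] at h2
  have G := good_of_symm hf (by omega) symm
  exact ⟨InnerProductSpace.ofNorm ℝ G.parallelogram⟩

theorem parallelogram_of_nonempty {X : Type*} [NormedAddCommGroup X]
    (I : InnerProductSpace ℝ X) (x y : X) :
    ‖x + y‖ * ‖x + y‖ + ‖x - y‖ * ‖x - y‖ = 2 * (‖x‖ * ‖x‖ + ‖y‖ * ‖y‖) :=
  parallelogram_law_with_norm_mul ℝ x y

theorem forward_aux_s11 {X : Type*} [NormedAddCommGroup X] [InnerProductSpace ℝ X] {n : ℕ}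
    (hn : 3 ≤ n) (hdim : Module.finrank ℝ X = n) (e : X) (he : ‖e‖ = 1) :
        ∃ b : Fin n → X,
          LinearIndependent ℝ b ∧ Submodule.span ℝ (Set.range b) = ⊤ ∧
          StronglyOrthSet b ∧ (∃ i, b i = e) ∧
          ∀ i : Fin n, ∀ g ∈ Submodule.span ℝ (b '' {j | j ≠ i}),
            ‖(0 : X) - g‖ ≤ ‖b i - g‖ := by
  haveI : FiniteDimensional ℝ X := FiniteDimensional.of_finrank_pos (by omega)
  let i₀ : Fin n := ⟨0, by omega⟩
  obtain ⟨b, hb⟩ := Orthonormal.exists_orthonormalBasis_extension_of_card_eq (𝕜 := ℝ) (E := X)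
    (ι := Fin n) (by simpa using hdim) (v := fun _ => e) (s := {i₀}) (by
      constructor
      · intro i; exact he
      · intro i j hij; exact absurd (Subsingleton.elim i j) hij)
  have pos : ∀ i, ∀ g ∈ Submodule.span ℝ (b '' {j | j ≠ i}), inner ℝ (b i) g = (0 : ℝ) := by
    intro i g hg
    have : Submodule.span ℝ (b '' {j | j ≠ i}) ≤ (innerSL ℝ (b i) : X →ₗ[ℝ] ℝ).ker := by
      rw [Submodule.span_le]
      rintro _ ⟨j, hj, rfl⟩
      exact b.orthonormal.2 (Ne.symm hj)
    exact this hg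
  refine ⟨b, b.orthonormal.linearIndependent, ?_, ?_, ⟨i₀, hb i₀ rfl⟩, ?_⟩
  · simpa using b.toBasis.span_eq
  · intro i
    refine ⟨b.orthonormal.1, ?_⟩
    rintro c ⟨j, hj, hc⟩
    set g := ∑ j ∈ Finset.univ.erase i, c j • b j with hg
    have hgm : g ∈ Submodule.span ℝ (b '' {j | j ≠ i}) := by
      refine Submodule.sum_mem _ fun l hl => Submodule.smul_mem _ _ (Submodule.subset_span ?_)
      exact ⟨l, (Finset.mem_erase.1 hl).1, rfl⟩
    have g0 : g ≠ 0 := by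
      intro h
      have := linearIndependent_iff'.1 b.orthonormal.linearIndependent _ c h j (by simp [hj])
      exact hc this
    have h1 := norm_add_sq_eq_norm_sq_add_norm_sq_of_inner_eq_zero _ _ (pos i g hgm)
    have h2 : 0 < ‖g‖ := norm_pos_iff.2 g0
    refine lt_of_mul_self_lt_mul_self₀ (norm_nonneg _) ?_
    nlinarith
  · intro i g hg
    have h1 := norm_sub_sq_eq_norm_sq_add_norm_sq_real (pos i g hg)
    rw [zero_sub, norm_neg]
    refine abs_le_of_sq_le_sq' ?_ (norm_nonneg _) |>.2
    nlinarith [mul_self_nonneg ‖b i‖]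

theorem stmt_11 {X : Type*} [NormedAddCommGroup X] [NormedSpace ℝ X] {n : ℕ}
    (hn : 3 ≤ n) (hdim : Module.finrank ℝ X = n) (hsm : SmoothSpace X) :
    Nonempty (InnerProductSpace ℝ X) ↔
      ∀ e : X, ‖e‖ = 1 →
        ∃ b : Fin n → X,
          LinearIndependent ℝ b ∧ Submodule.span ℝ (Set.range b) = ⊤ ∧
          StronglyOrthSet b ∧ (∃ i, b i = e) ∧
          ∀ i : Fin n, ∀ g ∈ Submodule.span ℝ (b '' {j | j ≠ i}),
            ‖(0 : X) - g‖ ≤ ‖b i - g‖ := by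
  constructor
  · rintro ⟨I⟩ e he
    have hpar := parallelogram_of_nonempty I
    letI J : InnerProductSpace ℝ X := InnerProductSpace.ofNorm ℝ hpar
    exact @forward_aux_s11 X _ J n hn hdim e he
  · exact backward hn hdim hsm
end
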